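/- Let F be a field, let s,ℓ,k ≥ 1, and let α,β,γ be nonzero elements of F. Let R := F[x,y,z]/⟨x^s−α, y^ℓ−β, z^k−γ⟩ with quotient map π, let V := (Fin s × Fin ℓ × Fin k) → F with the dot product ⟨c,d⟩ := Σ_{i,j,t} c(i,j,t)·d(i,j,t), and let φ : V → R be the F-linear isomorphism φ(c) := Σ_{i,j,t} c(i,j,t)·π(x^i y^j z^t). For a nonzero λ ∈ F define (T_λ^x c)(i,j,t) := λ·c(s−1,j,t) if i = 0 and c(i−1,j,t) otherwise, with T_λ^y, T_λ^z acting analogously on the second and third coordinates, and define ρ : V → V by (ρ c)(i,j,t) := c(s−1−i, ℓ−1−j, k−1−t). Then for all f, g ∈ R with a := φ^{−1}(f) and b := φ^{−1}(g): f·g = 0 in R if and only if for all natural numbers u, v, w one has ⟨a, (T_{α^{−1}}^x)^u (T_{β^{−1}}^y)^v (T_{γ^{−1}}^z)^w (ρ(b))⟩ = 0. -/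

import Mathlib

/-!
The monomial basis of `R = F[x,y,z]/⟨x^s − α, y^l − β, z^k − γ⟩` admits the top-coefficient
functional `Λ`, which reads off the coefficient of `x^(s-1) y^(l-1) z^(k-1)`
(`exists_topFunctional`). Since `i + i' ≡ s - 1 (mod s)` with `i, i' < s` forces
`i + i' = s - 1`, the bilinear form `(f, g) ↦ Λ (f g)` is the dot product of the coefficients of
`f` with the reversed coefficients of `g`.

On reversed coefficient vectors, the `α⁻¹`-constacyclic shift is multiplication by `x⁻¹`, and
likewise for `y` and `z` (`mul_revSum_shifts`). So the pairings in the theorem are the scalars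
`Λ (f g x^(-u) y^(-v) z^(-w))`, which clearly vanish if `f g = 0`. Conversely, if they all vanish,
then `Λ (f g m) = 0` for every monomial `m`, because `x^i = α^i x^(-i (s-1))`. The element `f g` is
`φ c` for some `c` (`phiV_surjective`), and taking `m` to be the basis monomials shows that every
coordinate of `c` is zero. No separate proof that `φ` is injective is needed.
-/

set_option synthInstance.maxHeartbeats 1000000

open Polynomial

/-! ### The quotient ring and constacyclic shifts -/

/-- The Lagrange interpolation polynomial `ζ_t` at the `k` points `ω^{1+t'r}`,
`0 ≤ t' ≤ k−1`. -/
noncomputable def zetaPoly {F : Type*} [Field F] (ω : F) (r k t : ℕ) : Polynomial F :=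
  ∏ t' ∈ (Finset.range k).erase t,
    (C ((ω ^ (1 + t * r) - ω ^ (1 + t' * r))⁻¹) * (X - C (ω ^ (1 + t' * r))))

/-- The ideal `⟨x^s − α, y^ℓ − β, z^k − γ⟩` of `F[x,y,z]`. -/
noncomputable def ccIdeal (F : Type*) [Field F] (s l k : ℕ) (α β γ : F) :
    Ideal (MvPolynomial (Fin 3) F) :=
  Ideal.span { MvPolynomial.X 0 ^ s - MvPolynomial.C α,
               MvPolynomial.X 1 ^ l - MvPolynomial.C β,
               MvPolynomial.X 2 ^ k - MvPolynomial.C γ }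

/-- A univariate polynomial viewed in `F[x,y,z]` as a polynomial in `x`. -/
noncomputable def inX {F : Type*} [Field F] (p : Polynomial F) : MvPolynomial (Fin 3) F :=
  Polynomial.aeval (MvPolynomial.X 0) p

/-- A univariate polynomial viewed in `F[x,y,z]` as a polynomial in `y`. -/
noncomputable def inY {F : Type*} [Field F] (p : Polynomial F) : MvPolynomial (Fin 3) F :=
  Polynomial.aeval (MvPolynomial.X 1) p

/-- A univariate polynomial viewed in `F[x,y,z]` as a polynomial in `z`. -/
noncomputable def inZ {F : Type*} [Field F] (p : Polynomial F) : MvPolynomial (Fin 3) F :=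
  Polynomial.aeval (MvPolynomial.X 2) p

/-- The `λ`-twisted shift in the `x`-direction on `V = (Fin s × Fin ℓ × Fin k) → F`:
`(T_λ^x c)(i,j,t) = λ·c(s−1,j,t)` if `i = 0`, and `c(i−1,j,t)` otherwise. -/
def shiftX {F : Type*} [Field F] {s l k : ℕ} [NeZero s] (lam : F)
    (c : Fin s × Fin l × Fin k → F) : Fin s × Fin l × Fin k → F :=
  fun w => (if w.1 = 0 then lam else 1) * c (w.1 - 1, w.2.1, w.2.2)

/-- The `λ`-twisted shift in the `y`-direction. -/
def shiftY {F : Type*} [Field F] {s l k : ℕ} [NeZero l] (lam : F)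
    (c : Fin s × Fin l × Fin k → F) : Fin s × Fin l × Fin k → F :=
  fun w => (if w.2.1 = 0 then lam else 1) * c (w.1, w.2.1 - 1, w.2.2)

/-- The `λ`-twisted shift in the `z`-direction. -/
def shiftZ {F : Type*} [Field F] {s l k : ℕ} [NeZero k] (lam : F)
    (c : Fin s × Fin l × Fin k → F) : Fin s × Fin l × Fin k → F :=
  fun w => (if w.2.2 = 0 then lam else 1) * c (w.1, w.2.1, w.2.2 - 1)

/-- The dot product on `V = (Fin s × Fin ℓ × Fin k) → F`. -/
def dotV {F : Type*} [Field F] {s l k : ℕ}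
    (c d : Fin s × Fin l × Fin k → F) : F :=
  ∑ w : Fin s × Fin l × Fin k, c w * d w

/-- Reversal of coordinates: `(ρ b)(i,j,t) = b(s−1−i, ℓ−1−j, k−1−t)`. -/
def revV {F : Type*} [Field F] {s l k : ℕ}
    (b : Fin s × Fin l × Fin k → F) : Fin s × Fin l × Fin k → F :=
  fun w => b (w.1.rev, w.2.1.rev, w.2.2.rev)

/-- The `F`-linear isomorphism `V → R` sending a coefficient vector `c` to
`Σ c(i,j,t)·π(x^i y^j z^t)` in `R = F[x,y,z]/⟨x^s−α, y^ℓ−β, z^k−γ⟩`. -/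
noncomputable def phiV {F : Type*} [Field F] {s l k : ℕ} (α β γ : F)
    (c : Fin s × Fin l × Fin k → F) :
    MvPolynomial (Fin 3) F ⧸ ccIdeal F s l k α β γ :=
  ∑ w : Fin s × Fin l × Fin k,
    c w • Ideal.Quotient.mk (ccIdeal F s l k α β γ)
      (MvPolynomial.X 0 ^ (w.1 : ℕ) * MvPolynomial.X 1 ^ (w.2.1 : ℕ) *
        MvPolynomial.X 2 ^ (w.2.2 : ℕ))

/-! ### The top-coefficient functional -/

/-- The coefficient of `x^(s-1)` in the reduction of `x^n` modulo `x^s - α`. -/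
def topCoeff {F : Type*} [Field F] (s : ℕ) (α : F) (n : ℕ) : F :=
  if n % s = s - 1 then α ^ (n / s) else 0

lemma topCoeff_add {F : Type*} [Field F] (s : ℕ) [NeZero s] (α : F) (n : ℕ) :
    topCoeff s α (n + s) = α * topCoeff s α n := by
  have hs : 0 < s := Nat.pos_of_ne_zero (NeZero.ne s)
  simp only [topCoeff, Nat.add_mod_right, Nat.add_div_right _ hs]
  split_ifs
  · rw [pow_succ']
  · simp

lemma topCoeff_rev {F : Type*} [Field F] {s : ℕ} [NeZero s] (α : F) (i j : Fin s) :
    topCoeff s α ((i : ℕ) + (j.rev : ℕ)) = if i = j then 1 else 0 := by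
  have hi := i.isLt
  have hj := j.isLt
  have hr : (j.rev : ℕ) = s - (j + 1) := Fin.val_rev j
  unfold topCoeff
  rw [hr]
  by_cases h : i = j
  · subst h
    have e : (i : ℕ) + (s - (i + 1)) = s - 1 := by omega
    rw [e, Nat.mod_eq_of_lt (by omega), Nat.div_eq_of_lt (by omega)]
    simp
  · have hne : (i : ℕ) ≠ j := fun e => h (Fin.ext e)
    rw [if_neg h, if_neg]
    intro e
    rcases lt_or_ge ((i : ℕ) + (s - (j + 1))) s with hlt | hge
    · rw [Nat.mod_eq_of_lt hlt] at e
      omega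
    · rw [Nat.mod_eq_sub_mod hge, Nat.mod_eq_of_lt (by omega)] at e
      omega

/-- The top-coefficient functional, defined on monomials of any degree, so that it makes sense on
the quotient before the monomial basis is known to be independent. -/
lemma exists_topFunctional {F : Type*} [Field F] (s l k : ℕ) [NeZero s] [NeZero l] [NeZero k]
    (α β γ : F) :
    ∃ Λ : (MvPolynomial (Fin 3) F ⧸ ccIdeal F s l k α β γ) →ₗ[F] F, ∀ i j t : ℕ,
      Λ (Ideal.Quotient.mk _ (MvPolynomial.X 0) ^ i * Ideal.Quotient.mk _ (MvPolynomial.X 1) ^ j *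
        Ideal.Quotient.mk _ (MvPolynomial.X 2) ^ t) =
      topCoeff s α i * topCoeff l β j * topCoeff k γ t := by
  let L : MvPolynomial (Fin 3) F →ₗ[F] F :=
    (MvPolynomial.basisMonomials (Fin 3) F).constr F fun e =>
      topCoeff s α (e 0) * topCoeff l β (e 1) * topCoeff k γ (e 2)
  have hL (e : Fin 3 →₀ ℕ) : L (MvPolynomial.monomial e 1) =
      topCoeff s α (e 0) * topCoeff l β (e 1) * topCoeff k γ (e 2) := by
    have := (MvPolynomial.basisMonomials (Fin 3) F).constr_basis F
      (fun e => topCoeff s α (e 0) * topCoeff l β (e 1) * topCoeff k γ (e 2)) e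
    simpa [L] using this
  -- It suffices to test the vanishing of `q ↦ L (q * p)` on monomials.
  have key (p : MvPolynomial (Fin 3) F)
      (h : ∀ e, L (MvPolynomial.monomial e 1 * p) = 0) (q) : L (q * p) = 0 := by
    have : L ∘ₗ LinearMap.mulRight F p = 0 := by
      refine (MvPolynomial.basisMonomials (Fin 3) F).ext fun e => ?_
      simpa using h e
    simpa using LinearMap.congr_fun this q
  have gen (v : Fin 3) (n : ℕ) (lam : F)
      (h : ∀ e : Fin 3 →₀ ℕ, L (MvPolynomial.monomial (e + Finsupp.single v n) 1) =
        lam * L (MvPolynomial.monomial e 1)) (q) :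
      L (q * (MvPolynomial.X v ^ n - MvPolynomial.C lam)) = 0 := by
    refine key _ (fun e => ?_) q
    rw [mul_sub, map_sub, MvPolynomial.X_pow_eq_monomial, MvPolynomial.monomial_mul, mul_comm _
      (MvPolynomial.C lam), MvPolynomial.C_mul', map_smul, mul_one, h, smul_eq_mul, sub_self]
  have hI : ∀ p ∈ ccIdeal F s l k α β γ, ∀ q, L (q * p) = 0 := by
    intro p hp
    unfold ccIdeal at hp
    induction hp using Submodule.span_induction with
    | mem p hp =>
      rcases hp with rfl | rfl | rfl
      · refine gen 0 s α fun e => ?_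
        simp only [hL]
        simp [topCoeff_add, mul_assoc]
      · refine gen 1 l β fun e => ?_
        simp only [hL]
        simp [topCoeff_add]
        ring
      · refine gen 2 k γ fun e => ?_
        simp only [hL]
        simp [topCoeff_add]
        ring
    | zero => simp
    | add p p' _ _ h h' => intro q; rw [mul_add, map_add, h, h', add_zero]
    | smul r p _ h => intro q; rw [smul_eq_mul, ← mul_assoc]; exact h _
  obtain ⟨Λ, hΛ⟩ : ∃ Λ : (MvPolynomial (Fin 3) F ⧸ ccIdeal F s l k α β γ) →ₗ[F] F,
      ∀ p, Λ (Ideal.Quotient.mk _ p) = L p :=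
    ⟨((ccIdeal F s l k α β γ).restrictScalars F).liftQ L (fun p hp => by simpa using hI p hp 1) ∘ₗ
      (Submodule.Quotient.restrictScalarsEquiv F (ccIdeal F s l k α β γ)).symm.toLinearMap,
      fun _ => rfl⟩
  refine ⟨Λ, fun i j t => ?_⟩
  rw [← map_pow, ← map_pow, ← map_pow, ← map_mul, ← map_mul, hΛ,
    MvPolynomial.X_pow_eq_monomial, MvPolynomial.X_pow_eq_monomial,
    MvPolynomial.X_pow_eq_monomial, MvPolynomial.monomial_mul, MvPolynomial.monomial_mul,
    mul_one, mul_one, hL]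
  simp

/-! ### Relations and spanning monomials in the quotient -/

lemma phiV_eq {F : Type*} [Field F] {s l k : ℕ} (α β γ : F) (c : Fin s × Fin l × Fin k → F) :
    phiV α β γ c = ∑ w, c w • (Ideal.Quotient.mk (ccIdeal F s l k α β γ) (MvPolynomial.X 0) ^
      (w.1 : ℕ) * Ideal.Quotient.mk _ (MvPolynomial.X 1) ^ (w.2.1 : ℕ) *
        Ideal.Quotient.mk _ (MvPolynomial.X 2) ^ (w.2.2 : ℕ)) := by
  simp only [phiV, map_mul, map_pow]

lemma mk_X_pow {F : Type*} [Field F] (s l k : ℕ) (α β γ : F) :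
    Ideal.Quotient.mk (ccIdeal F s l k α β γ) (MvPolynomial.X 0) ^ s = algebraMap F _ α ∧
    Ideal.Quotient.mk (ccIdeal F s l k α β γ) (MvPolynomial.X 1) ^ l = algebraMap F _ β ∧
    Ideal.Quotient.mk (ccIdeal F s l k α β γ) (MvPolynomial.X 2) ^ k = algebraMap F _ γ := by
  refine ⟨?_, ?_, ?_⟩ <;> rw [← map_pow] <;>
    refine Ideal.Quotient.eq.2 (Ideal.subset_span ?_) <;> simp [MvPolynomial.algebraMap_eq]

/-- `Algebra.smul_def` for the scalar action found by instance search on the quotient, which is not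
syntactically the one of the algebra structure. -/
lemma quot_smul_def {F : Type*} [Field F] {s l k : ℕ} {α β γ : F} (r : F)
    (q : MvPolynomial (Fin 3) F ⧸ ccIdeal F s l k α β γ) : r • q = algebraMap F _ r * q :=
  Algebra.smul_def r q

lemma phiV_surjective {F : Type*} [Field F] {s l k : ℕ} [NeZero s] [NeZero l] [NeZero k]
    (α β γ : F) (r : MvPolynomial (Fin 3) F ⧸ ccIdeal F s l k α β γ) :
    ∃ c : Fin s × Fin l × Fin k → F, phiV α β γ c = r := by
  obtain ⟨hx, hy, hz⟩ := mk_X_pow s l k α β γ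
  obtain ⟨p, rfl⟩ := Ideal.Quotient.mk_surjective r
  let Φ : (Fin s × Fin l × Fin k → F) →ₗ[F] (MvPolynomial (Fin 3) F ⧸ ccIdeal F s l k α β γ) :=
    Fintype.linearCombination F fun w => Ideal.Quotient.mk _ (MvPolynomial.X 0 ^ (w.1 : ℕ) *
      MvPolynomial.X 1 ^ (w.2.1 : ℕ) * MvPolynomial.X 2 ^ (w.2.2 : ℕ))
  suffices h : Ideal.Quotient.mk (ccIdeal F s l k α β γ) p ∈ LinearMap.range Φ by
    obtain ⟨c, hc⟩ := h
    exact ⟨c, hc⟩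
  induction p using MvPolynomial.induction_on' with
  | add p q hp hq => rw [map_add]; exact add_mem hp hq
  | monomial e r =>
    have red {n : ℕ} {lam : F} {r : MvPolynomial (Fin 3) F ⧸ ccIdeal F s l k α β γ}
        (hr : r ^ n = algebraMap F _ lam) (i : ℕ) :
        r ^ i = algebraMap F _ (lam ^ (i / n)) * r ^ (i % n) := by
      rw [map_pow, ← hr, ← pow_mul, ← pow_add, Nat.div_add_mod]
    have hmem : Φ (Pi.single (Fin.ofNat s (e 0), Fin.ofNat l (e 1), Fin.ofNat k (e 2)) 1) ∈
        LinearMap.range Φ := ⟨_, rfl⟩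
    have he : Ideal.Quotient.mk (ccIdeal F s l k α β γ) (MvPolynomial.monomial e r) =
        (r * (α ^ (e 0 / s) * β ^ (e 1 / l) * γ ^ (e 2 / k))) •
          Φ (Pi.single (Fin.ofNat s (e 0), Fin.ofNat l (e 1), Fin.ofNat k (e 2)) 1) := by
      have hr : Ideal.Quotient.mk (ccIdeal F s l k α β γ) (MvPolynomial.C r) =
        algebraMap F _ r := rfl
      simp only [Φ, Fintype.linearCombination_apply_single, one_smul, Fin.val_ofNat]
      rw [MvPolynomial.monomial_eq, Finsupp.prod_fintype _ _ (by simp), Fin.prod_univ_three]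
      simp only [map_mul, map_pow, quot_smul_def]
      rw [hr, red hx (e 0), red hy (e 1), red hz (e 2)]
      simp only [map_pow]
      ring
    rw [he]
    exact Submodule.smul_mem _ _ hmem

/-! ### Shifts of reversed coefficient vectors -/

/-- One variable of the shift relation: the twist `α⁻¹` at `i = 0` compensates the wrap-around
`x ^ s = α`. -/
lemma twist_smul_pow_rev {F R : Type*} [Field F] [CommRing R] [Algebra F R] {s : ℕ} [NeZero s]
    {α : F} (hα : α ≠ 0) {x : R} (hx : x ^ s = algebraMap F R α) (i : Fin s) :
    (if i = 0 then α⁻¹ else 1) • (x * x ^ (i.rev : ℕ)) = x ^ ((i - 1).rev : ℕ) := by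
  have hs : 0 < s := Nat.pos_of_ne_zero (NeZero.ne s)
  have hi := i.isLt
  rw [← pow_succ', Fin.val_rev, Fin.val_rev]
  obtain ⟨n, rfl⟩ : ∃ n, s = n + 1 := ⟨s - 1, by omega⟩
  rw [Fin.coe_sub_one]
  split_ifs with h
  · subst h
    simp [hx, Algebra.algebraMap_eq_smul_one, smul_smul, hα]
  · have : (i : ℕ) ≠ 0 := fun e => h (Fin.ext e)
    rw [one_smul]
    congr 1
    omega

/-- The element with reversed coefficient vector `d`, for elements `x, y, z` of an `F`-algebra. -/
def revSum {F R : Type*} [Field F] [CommRing R] [Algebra F R] {s l k : ℕ} (x y z : R)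
    (d : Fin s × Fin l × Fin k → F) : R :=
  ∑ w, d w • (x ^ (w.1.rev : ℕ) * y ^ (w.2.1.rev : ℕ) * z ^ (w.2.2.rev : ℕ))

section Shifts

variable {F R : Type*} [Field F] [CommRing R] [Algebra F R] {s l k : ℕ}
  {α β γ : F} {x y z : R}

lemma mul_revSum_shiftX [NeZero s] (hα : α ≠ 0) (hx : x ^ s = algebraMap F R α)
    (d : Fin s × Fin l × Fin k → F) :
    x * revSum x y z (shiftX α⁻¹ d) = revSum x y z d := by
  unfold revSum shiftX
  rw [Finset.mul_sum]
  refine Fintype.sum_equiv ((Equiv.subRight 1).prodCongr (Equiv.refl _)) _ _ fun w => ?_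
  simp only [Equiv.prodCongr_apply, Prod.map, Equiv.subRight_apply, Equiv.refl_apply]
  rw [← twist_smul_pow_rev hα hx]
  simp only [Algebra.smul_def, map_mul]
  ring

lemma mul_revSum_shiftY [NeZero l] (hβ : β ≠ 0) (hy : y ^ l = algebraMap F R β)
    (d : Fin s × Fin l × Fin k → F) :
    y * revSum x y z (shiftY β⁻¹ d) = revSum x y z d := by
  unfold revSum shiftY
  rw [Finset.mul_sum]
  refine Fintype.sum_equiv
    ((Equiv.refl _).prodCongr ((Equiv.subRight 1).prodCongr (Equiv.refl _))) _ _ fun w => ?_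
  simp only [Equiv.prodCongr_apply, Prod.map, Equiv.subRight_apply, Equiv.refl_apply]
  rw [← twist_smul_pow_rev hβ hy]
  simp only [Algebra.smul_def, map_mul]
  ring

lemma mul_revSum_shiftZ [NeZero k] (hγ : γ ≠ 0) (hz : z ^ k = algebraMap F R γ)
    (d : Fin s × Fin l × Fin k → F) :
    z * revSum x y z (shiftZ γ⁻¹ d) = revSum x y z d := by
  unfold revSum shiftZ
  rw [Finset.mul_sum]
  refine Fintype.sum_equiv
    ((Equiv.refl _).prodCongr ((Equiv.refl _).prodCongr (Equiv.subRight 1))) _ _ fun w => ?_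
  simp only [Equiv.prodCongr_apply, Prod.map, Equiv.subRight_apply, Equiv.refl_apply]
  rw [← twist_smul_pow_rev hγ hz]
  simp only [Algebra.smul_def, map_mul]
  ring

lemma pow_mul_iterate {V : Type*} (x : R) (T : V → V) (S : V → R) (h : ∀ d, x * S (T d) = S d)
    (u : ℕ) (d : V) : x ^ u * S (T^[u] d) = S d := by
  induction u generalizing d with
  | zero => simp
  | succ u ih => rw [Function.iterate_succ_apply, pow_succ', mul_assoc, ih, h]

/-- The shifts by `α⁻¹`, `β⁻¹`, `γ⁻¹` act on reversed coefficient vectors as division by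
`x`, `y`, `z`. -/
lemma mul_revSum_shifts [NeZero s] [NeZero l] [NeZero k] (hα : α ≠ 0) (hβ : β ≠ 0)
    (hγ : γ ≠ 0) (hx : x ^ s = algebraMap F R α)
    (hy : y ^ l = algebraMap F R β) (hz : z ^ k = algebraMap F R γ)
    (d : Fin s × Fin l × Fin k → F) (u v w : ℕ) :
    z ^ w * (y ^ v * (x ^ u * revSum x y z
      ((shiftX α⁻¹)^[u] ((shiftY β⁻¹)^[v] ((shiftZ γ⁻¹)^[w] d))))) = revSum x y z d := by
  rw [pow_mul_iterate x _ _ (mul_revSum_shiftX hα hx),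
    pow_mul_iterate y _ _ (mul_revSum_shiftY hβ hy),
    pow_mul_iterate z _ _ (mul_revSum_shiftZ hγ hz)]

lemma isUnit_of_pow_eq [NeZero s] (hα : α ≠ 0) (hx : x ^ s = algebraMap F R α) : IsUnit x :=
  (isUnit_pow_iff (NeZero.ne s)).1 (hx ▸ (IsUnit.mk0 α hα).map (algebraMap F R))

end Shifts

/-! ### Annihilation and orthogonality -/

/-- **Proposition 3**: for `f, g ∈ R` with coefficient vectors `a = φ⁻¹(f)`,
`b = φ⁻¹(g)`, one has `f·g = 0` in `R` iff `a` is orthogonal to the coefficient-reversal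
`ρ(b)` of `g` and to all of its `(α⁻¹,β⁻¹,γ⁻¹)`-constacyclic shifts. -/
theorem stmt14 {F : Type*} [Field F] (s l k : ℕ) [NeZero s] [NeZero l] [NeZero k]
    (α β γ : F) (hα : α ≠ 0) (hβ : β ≠ 0) (hγ : γ ≠ 0)
    (a b : Fin s × Fin l × Fin k → F) :
    phiV α β γ a * phiV α β γ b = 0 ↔
      ∀ u v w : ℕ,
        dotV a ((shiftX α⁻¹)^[u] ((shiftY β⁻¹)^[v] ((shiftZ γ⁻¹)^[w] (revV b)))) = 0 := by
  obtain ⟨Λ, hΛ⟩ := exists_topFunctional s l k α β γ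
  obtain ⟨hx, hy, hz⟩ := mk_X_pow s l k α β γ
  have hphi := phiV_eq (s := s) (l := l) (k := k) α β γ
  set x := Ideal.Quotient.mk (ccIdeal F s l k α β γ) (MvPolynomial.X 0)
  set y := Ideal.Quotient.mk (ccIdeal F s l k α β γ) (MvPolynomial.X 1)
  set z := Ideal.Quotient.mk (ccIdeal F s l k α β γ) (MvPolynomial.X 2)
  have hx' : IsUnit x := isUnit_of_pow_eq hα hx
  have hy' : IsUnit y := isUnit_of_pow_eq hβ hy
  have hz' : IsUnit z := isUnit_of_pow_eq hγ hz
  -- `Λ` against the complementary monomial reads off a coordinate.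
  have coord (c : Fin s × Fin l × Fin k → F) (w : Fin s × Fin l × Fin k) :
      Λ (phiV α β γ c * (x ^ (w.1.rev : ℕ) * y ^ (w.2.1.rev : ℕ) * z ^ (w.2.2.rev : ℕ))) =
        c w := by
    have e : ∀ i j t i' j' t' : ℕ, (x ^ i * y ^ j * z ^ t) * (x ^ i' * y ^ j' * z ^ t') =
        x ^ (i + i') * y ^ (j + j') * z ^ (t + t') := by intros; ring
    rw [hphi, Finset.sum_mul, map_sum, Finset.sum_eq_single w]
    · rw [smul_mul_assoc, map_smul, e, hΛ]
      simp only [topCoeff_rev, if_true, mul_one, smul_eq_mul]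
    · intro w' _ hw
      rw [smul_mul_assoc, map_smul, e, hΛ, topCoeff_rev, topCoeff_rev, topCoeff_rev]
      have : ¬ (w'.1 = w.1 ∧ w'.2.1 = w.2.1 ∧ w'.2.2 = w.2.2) := fun h =>
        hw (Prod.ext h.1 (Prod.ext h.2.1 h.2.2))
      by_cases h1 : w'.1 = w.1 <;> by_cases h2 : w'.2.1 = w.2.1 <;>
        by_cases h3 : w'.2.2 = w.2.2 <;> simp_all
    · simp
  have hdot (c d : Fin s × Fin l × Fin k → F) :
      dotV c d = Λ (phiV α β γ c * revSum x y z d) := by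
    rw [revSum, Finset.mul_sum, map_sum]
    refine Finset.sum_congr rfl fun w _ => ?_
    rw [mul_smul_comm, map_smul, coord, smul_eq_mul, mul_comm]
  have hrev : revSum x y z (revV b) = phiV α β γ b := by
    rw [hphi]
    refine Fintype.sum_equiv
      (Fin.revPerm.prodCongr (Fin.revPerm.prodCongr Fin.revPerm)) _ _ fun w => ?_
    rfl
  have hshift := mul_revSum_shifts hα hβ hγ hx hy hz (revV b)
  rw [hrev] at hshift
  constructor
  · intro h u v w
    rw [← hshift u v w] at h
    rw [hdot]
    have h0 : phiV α β γ a * revSum x y z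
        ((shiftX α⁻¹)^[u] ((shiftY β⁻¹)^[v] ((shiftZ γ⁻¹)^[w] (revV b)))) = 0 := by
      refine (((hz'.pow w).mul (hy'.pow v)).mul (hx'.pow u)).mul_right_eq_zero.1 ?_
      rw [← h]
      ring
    rw [h0, map_zero]
  · intro h
    obtain ⟨c, hc⟩ := phiV_surjective α β γ (phiV α β γ a * phiV α β γ b)
    have hcw : c = 0 := by
      funext w
      rw [← coord c w, hc]
      generalize (w.1.rev : ℕ) = i
      generalize (w.2.1.rev : ℕ) = j
      generalize (w.2.2.rev : ℕ) = t
      -- Modulo the relations, `x ^ i = α ^ i * x ^ (-i * (s - 1))`.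
      have key {n : ℕ} [NeZero n] {lam : F} {r : MvPolynomial (Fin 3) F ⧸ ccIdeal F s l k α β γ}
          (hr : r ^ n = algebraMap F _ lam) (i : ℕ) :
          r ^ (i * (n - 1)) * r ^ i = algebraMap F _ (lam ^ i) := by
        have hn : 0 < n := Nat.pos_of_ne_zero (NeZero.ne n)
        rw [← pow_add, map_pow, ← hr, ← pow_mul]
        congr 1
        obtain ⟨m, rfl⟩ : ∃ m, n = m + 1 := ⟨n - 1, by omega⟩
        simp only [Nat.add_sub_cancel]
        ring
      have h1 := h (i * (s - 1)) (j * (l - 1)) (t * (k - 1))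
      rw [hdot] at h1
      rw [← hshift (i * (s - 1)) (j * (l - 1)) (t * (k - 1))]
      set S := revSum x y z ((shiftX α⁻¹)^[i * (s - 1)] ((shiftY β⁻¹)^[j * (l - 1)]
        ((shiftZ γ⁻¹)^[t * (k - 1)] (revV b))))
      have e : phiV α β γ a * (z ^ (t * (k - 1)) * (y ^ (j * (l - 1)) * (x ^ (i * (s - 1)) * S)))
          * (x ^ i * y ^ j * z ^ t) = (α ^ i * β ^ j * γ ^ t) • (phiV α β γ a * S) := by
        rw [quot_smul_def (α ^ i * β ^ j * γ ^ t), map_mul, map_mul, ← key hx, ← key hy, ← key hz]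
        ring
      rw [e, map_smul, h1, smul_zero, Pi.zero_apply]
    rw [← hc, hcw, hphi]
    simp
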